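/- arXiv:2312.12223 — 3 statements merged into one kernel-verified Lean document; each statement's English description precedes it below -/
import Mathlib

section
/- Let ℝ act additively on a type X, let η : X → Z be an invariant encoder, δ : Z → X a decoder, and ψ : X → ℝ an equivariant and suitable group action estimator. Fix c ∈ X with trivial stabilizer and θ > 0, and let C = {a +ᵥ c : a ∈ [-θ, θ]} be the symmetry class of c with boundary θ. Then the following are equivalent: (i) ψ c = 0; (ii) δ (η s) = c for every s ∈ C; (iii) the image ψ '' C equals the interval [-θ, θ]. -/
/-- Proposition 1 (uniform symmetries): for an invariant encoder `η`, decoder `δ` and an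
equivariant, suitable group action estimator `ψ`, with `c` having trivial stabilizer and
symmetry class `C = {a +ᵥ c : a ∈ [-θ, θ]}`, the three conditions are equivalent. -/
theorem stmt_0 {X Z : Type*} [AddAction ℝ X]
    (η : X → Z) (δ : Z → X) (ψ : X → ℝ)
    (hinv : ∀ (a : ℝ) (x : X), η (a +ᵥ x) = η x)
    (hequiv : ∀ (a : ℝ) (x : X), ψ (a +ᵥ x) = a + ψ x)
    (hsuit : ∀ x : X, (ψ x) +ᵥ δ (η x) = x)
    (c : X) (hstab : ∀ a : ℝ, a +ᵥ c = c → a = 0)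
    (θ : ℝ) (hθ : 0 < θ)
    (C : Set X) (hC : C = {s | ∃ a ∈ Set.Icc (-θ) θ, s = a +ᵥ c}) :
    List.TFAE [ψ c = 0,
      ∀ s ∈ C, δ (η s) = c,
      ψ '' C = Set.Icc (-θ) θ] := by
  subst hC
  tfae_have 1 → 2 := by
    rintro h s ⟨a, -, rfl⟩
    have h1 := hsuit c
    rw [h, zero_vadd] at h1
    rw [hinv, h1]
  tfae_have 2 → 1 := by
    intro h
    have h1 := h c ⟨0, ⟨by linarith, by linarith⟩, (zero_vadd ℝ c).symm⟩
    have h2 := hsuit c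
    rw [h1] at h2
    exact hstab _ h2
  tfae_have 1 → 3 := by
    intro h
    ext t
    constructor
    · rintro ⟨_, ⟨a, ha, rfl⟩, rfl⟩
      rw [hequiv, h, add_zero]
      exact ha
    · intro ht
      exact ⟨t +ᵥ c, ⟨t, ht, rfl⟩, by rw [hequiv, h, add_zero]⟩
  tfae_have 3 → 1 := by
    intro h
    have h1 : ψ (θ +ᵥ c) ∈ Set.Icc (-θ) θ := by
      rw [← h]
      exact ⟨_, ⟨θ, ⟨by linarith, le_refl _⟩, rfl⟩, rfl⟩
    have h2 : ψ ((-θ) +ᵥ c) ∈ Set.Icc (-θ) θ := by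
      rw [← h]
      exact ⟨_, ⟨-θ, ⟨le_refl _, by linarith⟩, rfl⟩, rfl⟩
    rw [hequiv] at h1 h2
    linarith [h1.2, h2.1]
  tfae_finish
end

section
/- Let ℝ act additively on a type X, let η : X → Z be an invariant encoder, δ : Z → X a decoder, and ψ : X → ℝ an equivariant and suitable group action estimator. Fix c ∈ X with trivial stabilizer, and let S ⊂ ℝ be a finite nonempty set of angles with 0 ∈ S, and C = {a +ᵥ c : a ∈ S}. Then the following are equivalent: (i) ψ c = 0; (ii) δ (η s) = c for every s ∈ C; (iii) the image ψ '' C equals S. -/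
/-- Proposition 2 (Gaussian symmetries): with a finite nonempty sample `S` of angles
containing `0`, and class `C = {a +ᵥ c : a ∈ S}`, the three conditions are equivalent. -/
theorem stmt_5 {X Z : Type*} [AddAction ℝ X]
    (η : X → Z) (δ : Z → X) (ψ : X → ℝ)
    (hinv : ∀ (a : ℝ) (x : X), η (a +ᵥ x) = η x)
    (hequiv : ∀ (a : ℝ) (x : X), ψ (a +ᵥ x) = a + ψ x)
    (hsuit : ∀ x : X, (ψ x) +ᵥ δ (η x) = x)
    (c : X) (hstab : ∀ a : ℝ, a +ᵥ c = c → a = 0)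
    (S : Finset ℝ) (hS : S.Nonempty) (h0 : (0 : ℝ) ∈ S)
    (C : Set X) (hC : C = {s | ∃ a ∈ S, s = a +ᵥ c}) :
    List.TFAE [ψ c = 0,
      ∀ s ∈ C, δ (η s) = c,
      ψ '' C = ↑S] := by
  have mem : ∀ a ∈ S, a +ᵥ c ∈ C := fun a ha => by
    rw [hC]; exact ⟨a, ha, rfl⟩
  tfae_have 1 → 2 := by
    intro h s hs
    rw [hC] at hs
    obtain ⟨a, _, rfl⟩ := hs
    have := hsuit c
    rw [h, zero_vadd] at this
    rw [hinv, this]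
  tfae_have 2 → 1 := by
    intro h
    have h1 := h _ (mem 0 h0)
    rw [zero_vadd] at h1
    have h2 := hsuit c
    rw [h1] at h2
    exact hstab _ h2
  tfae_have 1 → 3 := by
    intro h
    ext y
    constructor
    · rintro ⟨x, hx, rfl⟩
      rw [hC] at hx
      obtain ⟨a, ha, rfl⟩ := hx
      rw [hequiv, h, add_zero]
      exact ha
    · intro hy
      exact ⟨y +ᵥ c, mem y hy, by rw [hequiv, h, add_zero]⟩
  tfae_have 3 → 1 := by
    intro h
    have key : ∀ a ∈ S, a + ψ c ∈ S := by
      intro a ha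
      have : ψ (a +ᵥ c) ∈ ψ '' C := ⟨_, mem a ha, rfl⟩
      rw [h, hequiv] at this
      exact this
    have h1 := S.le_max' _ (key _ (S.max'_mem hS))
    have h2 := S.min'_le _ (key _ (S.min'_mem hS))
    linarith
  tfae_finish
end

section
/- Let G be a group acting on a type X, let η : X → Z be a G-invariant encoder, δ : Z → X a decoder, and ψ : X → G a G-equivariant and suitable group action estimator. Let S be a subgroup of G, let c₀ ∈ X, let C = {g • c₀ : g ∈ S}, and assume every element of C has trivial stabilizer. Then the following are equivalent: (i) there exists c ∈ C with ψ c = 1; (ii) there exists c ∈ C such that δ (η s) = c for every s ∈ C; (iii) the image ψ '' C equals the carrier of S. -/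
/-- Proposition 3 (cyclic/discrete symmetries): with `S` a subgroup of `G`, class
`C = {g • c₀ : g ∈ S}` whose elements all have trivial stabilizer, the three conditions are
equivalent. -/
theorem stmt_7 {G X Z : Type*} [Group G] [MulAction G X]
    (η : X → Z) (δ : Z → X) (ψ : X → G)
    (hinv : ∀ (g : G) (x : X), η (g • x) = η x)
    (hequiv : ∀ (g : G) (x : X), ψ (g • x) = g * ψ x)
    (hsuit : ∀ x : X, (ψ x) • δ (η x) = x)
    (S : Subgroup G) (c₀ : X)
    (C : Set X) (hC : C = {x | ∃ g ∈ S, x = g • c₀})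
    (hstab : ∀ c ∈ C, ∀ g : G, g • c = c → g = 1) :
    List.TFAE [∃ c ∈ C, ψ c = 1,
      ∃ c ∈ C, ∀ s ∈ C, δ (η s) = c,
      ψ '' C = ↑S] := by
  subst hC
  tfae_have 1 → 2 := by
    rintro ⟨c, ⟨g, hg, rfl⟩, h1⟩
    refine ⟨g • c₀, ⟨g, hg, rfl⟩, ?_⟩
    rintro s ⟨k, hk, rfl⟩
    have h2 := hsuit (g • c₀)
    rw [h1, one_smul, hinv] at h2
    rw [hinv, h2]
  tfae_have 2 → 3 := by
    rintro ⟨c, ⟨g, hg, rfl⟩, h⟩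
    have h2 := hsuit (g • c₀)
    rw [h _ ⟨g, hg, rfl⟩] at h2
    have h3 := hstab _ ⟨g, hg, rfl⟩ _ h2
    rw [hequiv] at h3
    have h4 : ψ c₀ = g⁻¹ := eq_inv_of_mul_eq_one_right h3
    ext a
    constructor
    · rintro ⟨x, ⟨k, hk, rfl⟩, rfl⟩
      rw [hequiv, h4]
      exact S.mul_mem hk (S.inv_mem hg)
    · intro ha
      refine ⟨(a * g) • c₀, ⟨a * g, S.mul_mem ha hg, rfl⟩, ?_⟩
      rw [hequiv, h4, mul_inv_cancel_right]
  tfae_have 3 → 1 := by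
    intro h
    have h1 : (1 : G) ∈ (S : Set G) := S.one_mem
    rw [← h] at h1
    exact h1
  tfae_finish
end
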